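/- arXiv:gr-qc/9806113 — 2 statements merged into one kernel-verified Lean document; each statement's English description precedes it below -/
import Mathlib

section
/- Assume α > 1. Let (p,q) be a solution of the planar system on (−∞, τ₀] with (p(τ), q(τ)) ∈ Ω for all τ ≤ τ₀, not identically equal to the equilibrium (1/√2, 0). Then the set of limit points of (p(τ), q(τ)) as τ → −∞ (i.e. the set of x ∈ ℝ² for which there exists a sequence τₙ → −∞ with (p(τₙ), q(τₙ)) → x) is exactly the boundary curve ∂Ω = {(p,q) : p ≥ 0 and p² + q² = 1} ∪ {(0,q) : −1 ≤ q ≤ 1}; that is, ∂Ω is a past limit cycle for every non-stationary physical trajectory. -/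
/-- The physical phase space `Ω = {(p,q) : p > 0 ∧ p² + q² < 1}`. -/
def Omega : Set (ℝ × ℝ) := {x : ℝ × ℝ | 0 < x.1 ∧ x.1 ^ 2 + x.2 ^ 2 < 1}

open Filter Set Topology

/-- The mean value theorem, in product form. -/
lemma exists_sub_eq_deriv_mul {f f' : ℝ → ℝ} {a b : ℝ} (hab : a < b)
    (hf : ∀ x ∈ Icc a b, HasDerivAt f (f' x) x) :
    ∃ x ∈ Ioo a b, f b - f a = f' x * (b - a) := by
  obtain ⟨x, hx, h⟩ := exists_hasDerivAt_eq_slope f f' hab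
    (fun x hx => (hf x hx).continuousAt.continuousWithinAt)
    (fun x hx => hf x (Ioo_subset_Icc_self hx))
  refine ⟨x, hx, ?_⟩
  rw [h, div_mul_cancel₀ _ (sub_pos.2 hab).ne']

/-- A function on a left half-line whose derivative is bounded below by a positive constant
is not bounded below. -/
lemma not_bddBelow_of_deriv_ge {f f' : ℝ → ℝ} {T κ B : ℝ} (hκ : 0 < κ)
    (hf : ∀ x ≤ T, HasDerivAt f (f' x) x) (hf' : ∀ x ≤ T, κ ≤ f' x)
    (hB : ∀ x ≤ T, B ≤ f x) : False := by
  have hBT := hB T le_rfl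
  have hK : 0 < (f T - B + 1) / κ := by positivity
  obtain ⟨x, hx, h⟩ := exists_sub_eq_deriv_mul (f := f) (f' := f')
    (sub_lt_self T hK) (fun x hx => hf x hx.2)
  have h1 := hf' x hx.2.le
  have h2 := hB (T - (f T - B + 1) / κ) (by linarith)
  have h3 : κ * ((f T - B + 1) / κ) = f T - B + 1 := by field_simp
  nlinarith [mul_le_mul_of_nonneg_right h1 hK.le]

/-- A function going from at most `c` to above `c` crosses the level `c` with nonnegative
derivative. -/
lemma exists_eq_deriv_nonneg {f f' : ℝ → ℝ} {a b c : ℝ} (hab : a ≤ b)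
    (hf : ∀ x ∈ Icc a b, HasDerivAt f (f' x) x) (ha : f a ≤ c) (hb : c < f b) :
    ∃ x ∈ Icc a b, f x = c ∧ 0 ≤ f' x := by
  by_contra! h
  refine hb.not_ge (image_le_of_deriv_right_lt_deriv_boundary (f := f) (f' := f')
    (B := fun _ => c) (B' := fun _ => 0)
    (fun x hx => (hf x hx).continuousAt.continuousWithinAt)
    (fun x hx => (hf x (Ico_subset_Icc_self hx)).hasDerivWithinAt) ha
    (fun x => hasDerivAt_const x c)
    (fun x hx => h x (Ico_subset_Icc_self hx)) (right_mem_Icc.2 hab))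

/-- A function that is below and above `c` at arbitrarily early times crosses the level `c`
with nonnegative derivative at arbitrarily early times. -/
lemma frequently_eq_deriv_nonneg {f f' : ℝ → ℝ} {T c : ℝ}
    (hf : ∀ x ≤ T, HasDerivAt f (f' x) x)
    (hgt : ∃ᶠ x in atBot, c < f x) (hlt : ∃ᶠ x in atBot, f x < c) :
    ∃ᶠ x in atBot, f x = c ∧ 0 ≤ f' x := by
  rw [frequently_atBot] at hgt hlt ⊢
  intro S
  obtain ⟨b, hb, hbc⟩ := hgt (min S T)
  obtain ⟨a, hab, hac⟩ := hlt b
  obtain ⟨x, hx, h⟩ := exists_eq_deriv_nonneg hab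
    (fun x hx => hf x (hx.2.trans (hb.trans (min_le_right _ _)))) hac.le hbc
  exact ⟨x, hx.2.trans (hb.trans (min_le_left _ _)), h⟩

/-- If `f` takes values in `[-1, 1]` and moves with speed at least `δ` whenever `a ≤ f`, then
`f < a` at all sufficiently early times. -/
lemma lt_of_le_abs_deriv {f f' : ℝ → ℝ} {T a δ : ℝ} (hδ : 0 < δ)
    (hf : ∀ x ≤ T, HasDerivAt f (f' x) x) (hb : ∀ x ≤ T, |f x| ≤ 1)
    (hs : ∀ x ≤ T, a ≤ f x → δ ≤ |f' x|) {t : ℝ} (ht : t ≤ T - 3 / δ) : f t < a := by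
  by_contra! hat
  have hK : 0 < 3 / δ := by positivity
  have hδK : δ * (3 / δ) = 3 := by field_simp
  have window : ∀ s, s + 3 / δ ≤ T → ∃ x ∈ Icc s (s + 3 / δ), f x < a := by
    intro s hsT
    by_contra! h
    obtain ⟨x, hx, hx'⟩ := exists_sub_eq_deriv_mul (f := f) (f' := f')
      (lt_add_of_pos_right s hK) (fun x hx => hf x (hx.2.trans hsT))
    have h1 := hs x (hx.2.le.trans hsT) (h x (Ioo_subset_Icc_self hx))
    have h2 := abs_le.1 (hb s (by linarith))
    have h3 := abs_le.1 (hb _ hsT)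
    rw [add_sub_cancel_left] at hx'
    have h4 : |f (s + 3 / δ) - f s| ≤ 2 := abs_le.2 ⟨by linarith, by linarith⟩
    rw [hx', abs_mul, abs_of_pos hK] at h4
    nlinarith [mul_le_mul_of_nonneg_right h1 hK.le]
  obtain ⟨l, hl, hla⟩ := window (t - 3 / δ) (by linarith)
  obtain ⟨r, hr, hra⟩ := window t (by linarith)
  rw [sub_add_cancel] at hl
  have hrT : r ≤ T := by linarith [hr.2]
  obtain ⟨m, hm, hmax⟩ := isCompact_Icc.exists_isMaxOn (nonempty_Icc.2 (hl.2.trans hr.1))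
    (fun x hx => (hf x (hx.2.trans hrT)).continuousAt.continuousWithinAt : ContinuousOn f (Icc l r))
  have hma : a ≤ f m := hat.trans (hmax ⟨hl.2, hr.1⟩)
  have hlm : l < m := hm.1.lt_of_ne (by rintro rfl; linarith)
  have hmr : m < r := hm.2.lt_of_ne (by rintro rfl; linarith)
  have h0 := (hmax.isLocalMax (Icc_mem_nhds hlm hmr)).hasDerivAt_eq_zero (hf m (hm.2.trans hrT))
  have := hs m (hm.2.trans hrT) hma
  rw [h0, abs_zero] at this
  linarith

/-- Orbits of the system in the variables `u = p²`, `w = 1 - p² - q²` and `q`, in which it is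
symmetric under exchanging `u` and `w` and reversing the sign of `q`. -/
structure IsOrbit (α T : ℝ) (u w q : ℝ → ℝ) : Prop where
  u_pos : ∀ t ≤ T, 0 < u t
  w_pos : ∀ t ≤ T, 0 < w t
  sum_eq : ∀ t ≤ T, u t + w t + q t ^ 2 = 1
  deriv_u : ∀ t ≤ T, HasDerivAt u (2 * (q t ^ 2 - α * q t) * u t) t
  deriv_w : ∀ t ≤ T, HasDerivAt w (2 * (q t ^ 2 + α * q t) * w t) t
  deriv_q : ∀ t ≤ T, HasDerivAt q (α * (u t - w t) - q t * (u t + w t)) t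

namespace IsOrbit

variable {α T : ℝ} {u w q : ℝ → ℝ}

lemma swap (h : IsOrbit α T u w q) : IsOrbit α T w u (fun t => -q t) where
  u_pos := h.w_pos
  w_pos := h.u_pos
  sum_eq t ht := by linarith [h.sum_eq t ht]
  deriv_u t ht := (h.deriv_w t ht).congr_deriv (by ring)
  deriv_w t ht := (h.deriv_u t ht).congr_deriv (by ring)
  deriv_q t ht := (h.deriv_q t ht).neg.congr_deriv (by ring)

lemma mono (h : IsOrbit α T u w q) {S : ℝ} (hS : S ≤ T) : IsOrbit α S u w q where
  u_pos t ht := h.u_pos t (ht.trans hS)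
  w_pos t ht := h.w_pos t (ht.trans hS)
  sum_eq t ht := h.sum_eq t (ht.trans hS)
  deriv_u t ht := h.deriv_u t (ht.trans hS)
  deriv_w t ht := h.deriv_w t (ht.trans hS)
  deriv_q t ht := h.deriv_q t (ht.trans hS)

lemma abs_q_le (h : IsOrbit α T u w q) {t : ℝ} (ht : t ≤ T) : |q t| ≤ 1 := by
  rw [← sq_le_one_iff_abs_le_one]
  linarith [h.u_pos t ht, h.w_pos t ht, h.sum_eq t ht]

lemma deriv_mul (h : IsOrbit α T u w q) {t : ℝ} (ht : t ≤ T) :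
    HasDerivAt (fun t => u t * w t) (4 * q t ^ 2 * (u t * w t)) t :=
  ((h.deriv_u t ht).mul (h.deriv_w t ht)).congr_deriv (by ring)

/-- The Lyapunov function `u * w` is nondecreasing. -/
lemma mul_le_mul (h : IsOrbit α T u w q) {s t : ℝ} (hst : s ≤ t) (ht : t ≤ T) :
    u s * w s ≤ u t * w t := by
  rcases hst.eq_or_lt with rfl | hlt
  · rfl
  obtain ⟨x, hx, hx'⟩ := exists_sub_eq_deriv_mul hlt
    (fun x hx => h.deriv_mul (hx.2.trans ht))
  have hxT := hx.2.le.trans ht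
  have := h.u_pos x hxT
  have := h.w_pos x hxT
  have := sub_pos.2 hlt
  have : 0 ≤ 4 * q x ^ 2 * (u x * w x) * (t - s) := by positivity
  linarith

/-- Away from the equilibrium, `u * w` cannot stay bounded away from zero: otherwise
`q * (u - w)` plus a large multiple of `u * w` would increase at a uniform rate. -/
lemma exists_mul_lt (h : IsOrbit α T u w q) (hα : 1 < α) (hT : u T * w T < 1 / 4)
    {L : ℝ} (hL : 0 < L) : ∃ t ≤ T, u t * w t < L := by
  by_contra! hge
  set A := (4 + 2 * α) / (4 * L) with hA
  have hA0 : 0 < A := by positivity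
  have hAL : 4 * A * L = 4 + 2 * α := by rw [hA]; field_simp
  refine not_bddBelow_of_deriv_ge (f := fun t => A * (u t * w t) + q t * (u t - w t))
    (B := -1) (sub_pos.2 hT)
    (fun t ht => ((h.deriv_mul ht).const_mul A).add
      ((h.deriv_q t ht).mul ((h.deriv_u t ht).sub (h.deriv_w t ht)))) ?_ ?_
  · intro t ht
    have hu := h.u_pos t ht
    have hw := h.w_pos t ht
    have hsum := h.sum_eq t ht
    have hV := hge t ht
    have hVT := h.mul_le_mul ht le_rfl
    have hq := abs_le.1 (h.abs_q_le ht)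
    generalize u t = x at *
    generalize w t = y at *
    generalize q t = z at *
    have hz := sq_nonneg z
    have hxy : x + y = 1 - z ^ 2 := by linarith
    have h1 : (4 + 2 * α) * z ^ 2 ≤ A * (4 * z ^ 2 * (x * y)) := by
      have := mul_le_mul_of_nonneg_left hV (by positivity : 0 ≤ 4 * A * z ^ 2)
      nlinarith
    have h2 : -z ^ 2 ≤ z ^ 2 * (z * (x - y)) := by
      have : -1 ≤ z * (x - y) := by nlinarith
      nlinarith
    have h3 : z * (x - y) * (x + y) ≤ (x - y) ^ 2 / 4 + z ^ 2 := by
      have : (z * (x + y)) ^ 2 ≤ z ^ 2 := by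
        rw [mul_pow]
        exact mul_le_of_le_one_right hz (by nlinarith)
      nlinarith [sq_nonneg ((x - y) / 2 - z * (x + y))]
    have h4 : 2 * α * (z ^ 2 * (x + y)) ≤ 2 * α * z ^ 2 := by
      have : z ^ 2 * (x + y) ≤ z ^ 2 := mul_le_of_le_one_right hz (by linarith)
      nlinarith
    have h5 : 1 / 4 - x * y ≤ (x - y) ^ 2 / 4 + z ^ 2 := by
      have : (x + y) ^ 2 = (1 - z ^ 2) ^ 2 := by rw [hxy]
      nlinarith [sq_nonneg (z ^ 2)]
    have h6 : (x - y) ^ 2 ≤ α * (x - y) ^ 2 := by nlinarith [sq_nonneg (x - y)]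
    nlinarith [sq_nonneg (x - y)]
  · intro t ht
    have hu := h.u_pos t ht
    have hw := h.w_pos t ht
    have hsum := h.sum_eq t ht
    have hq := abs_le.1 (h.abs_q_le ht)
    have : 0 < A * (u t * w t) := by positivity
    have : -1 ≤ q t * (u t - w t) := by nlinarith
    linarith

lemma tendsto_mul (h : IsOrbit α T u w q) (hα : 1 < α) (hT : u T * w T < 1 / 4) :
    Tendsto (fun t => u t * w t) atBot (𝓝 0) := by
  rw [tendsto_order]
  refine ⟨fun a ha => ?_, fun a ha => ?_⟩
  · filter_upwards [eventually_le_atBot T] with t ht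
    exact ha.trans (mul_pos (h.u_pos t ht) (h.w_pos t ht))
  · obtain ⟨S, hS, hSa⟩ := h.exists_mul_lt hα hT ha
    filter_upwards [eventually_le_atBot S] with t ht
    exact (h.mul_le_mul ht hS).trans_lt hSa

/-- Where `1 - q ^ 2` is bounded below and `u * w` is small, `q` moves at a definite speed. -/
lemma le_abs_deriv_q (h : IsOrbit α T u w q) (hα : 1 < α) {b ε t : ℝ}
    (hε : 0 < ε) (hbε : 4 * α * ε ≤ b * (α - 1)) (ht : t ≤ T)
    (hb : b ≤ 1 - q t ^ 2) (hV : u t * w t < ε ^ 2) :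
    b * (α - 1) / 2 ≤ |α * (u t - w t) - q t * (u t + w t)| := by
  have hu := h.u_pos t ht
  have hw := h.w_pos t ht
  have hsum := h.sum_eq t ht
  have hq := abs_le.1 (h.abs_q_le ht)
  rw [le_abs']
  rcases le_or_gt (u t) ε with hle | hgt
  · left
    have : b * (α - 1) ≤ (u t + w t) * (α + q t) := by
      apply _root_.mul_le_mul <;> linarith
    nlinarith
  · right
    have hle : w t ≤ ε := by nlinarith
    have : b * (α - 1) ≤ (u t + w t) * (α - q t) := by
      apply _root_.mul_le_mul <;> linarith
    nlinarith

lemma frequently_lt_q (h : IsOrbit α T u w q) (hα : 1 < α) (hT : u T * w T < 1 / 4)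
    {c : ℝ} (hc : c ∈ Ioo (-1) 1) : ∃ᶠ t in atBot, c < q t := by
  intro hev
  set b := min (3 / 4) (1 - c ^ 2) with hb
  have hb0 : 0 < b := lt_min (by norm_num) (by nlinarith [hc.1, hc.2])
  have hα1 := sub_pos.2 hα
  have hα0 : 0 < α := by linarith
  set ε := b * (α - 1) / (4 * α) with hε
  have hε0 : 0 < ε := by positivity
  have hbε : 4 * α * ε = b * (α - 1) := by rw [hε]; field_simp
  have hVev := (h.tendsto_mul hα hT).eventually_lt_const (by positivity : 0 < ε ^ 2)
  obtain ⟨S, hS⟩ := eventually_atBot.1 (hev.and (hVev.and (eventually_le_atBot T)))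
  have hST := (hS S le_rfl).2.2
  have hδ : 0 < b * (α - 1) / 2 := by positivity
  have hlow : ∀ t ≤ S - 3 / (b * (α - 1) / 2), q t < -1 / 2 := by
    intro t ht
    refine lt_of_le_abs_deriv hδ (h.mono hST).deriv_q
      (fun x hx => h.abs_q_le (hx.trans hST)) (fun x hx hax => ?_) ht
    obtain ⟨hxc, hxV, hxT⟩ := hS x hx
    refine h.le_abs_deriv_q hα hε0 hbε.le hxT ?_ hxV
    rcases le_or_gt (q x) 0 with h0 | h0
    · exact (min_le_left _ _).trans (by nlinarith)
    · exact (min_le_right _ _).trans (by nlinarith [not_lt.1 hxc])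
  have hRT : S - 3 / (b * (α - 1) / 2) ≤ T := by
    have : 0 < 3 / (b * (α - 1) / 2) := by positivity
    linarith
  refine not_bddBelow_of_deriv_ge (f := fun t => -Real.log (w t)) (B := 0) hα1
    (fun t ht => ((h.deriv_w t (ht.trans hRT)).log (h.w_pos t (ht.trans hRT)).ne').neg) ?_ ?_
  · intro t ht
    have hq := abs_le.1 (h.abs_q_le (ht.trans hRT))
    rw [mul_div_cancel_right₀ _ (h.w_pos t (ht.trans hRT)).ne']
    nlinarith [hlow t ht]
  · intro t ht
    have htT := ht.trans hRT
    exact neg_nonneg.2 (Real.log_nonpos (h.w_pos t htT).le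
      (by nlinarith [h.u_pos t htT, h.sum_eq t htT, sq_nonneg (q t)]))

lemma frequently_q_lt (h : IsOrbit α T u w q) (hα : 1 < α) (hT : u T * w T < 1 / 4)
    {c : ℝ} (hc : c ∈ Ioo (-1) 1) : ∃ᶠ t in atBot, q t < c := by
  have := h.swap.frequently_lt_q hα (by rwa [mul_comm])
    (c := -c) ⟨by linarith [hc.2], by linarith [hc.1]⟩
  simpa only [neg_lt_neg_iff] using this

/-- Upward crossings of a level `q = c` accumulate at `w = 0`. -/
lemma exists_seq_tendsto_w (h : IsOrbit α T u w q) (hα : 1 < α) (hT : u T * w T < 1 / 4)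
    {c : ℝ} (hc : c ∈ Ioo (-1) 1) :
    ∃ s : ℕ → ℝ, Tendsto s atTop atBot ∧ (∀ n, s n ≤ T) ∧ (∀ n, q (s n) = c) ∧
      Tendsto (fun n => w (s n)) atTop (𝓝 0) := by
  have hfreq := (frequently_eq_deriv_nonneg h.deriv_q (h.frequently_lt_q hα hT hc)
    (h.frequently_q_lt hα hT hc)).and_eventually (eventually_le_atBot T)
  obtain ⟨s, hs, hP⟩ := exists_seq_forall_of_frequently hfreq
  refine ⟨s, hs, fun n => (hP n).2, fun n => (hP n).1.1, ?_⟩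
  have hα0 : 0 < α := by linarith
  have hk : 0 < (1 - c ^ 2) * (α + c) / (2 * α) :=
    div_pos (mul_pos (by nlinarith [hc.1, hc.2]) (by linarith [hc.1])) (by linarith)
  have hlim := ((h.tendsto_mul hα hT).comp hs).div_const ((1 - c ^ 2) * (α + c) / (2 * α))
  rw [zero_div] at hlim
  refine squeeze_zero (fun n => (h.w_pos _ (hP n).2).le) (fun n => ?_) hlim
  obtain ⟨⟨hqc, hd⟩, hn⟩ := hP n
  have hw := h.w_pos _ hn
  have hsum := h.sum_eq _ hn
  rw [hqc] at hd hsum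
  have hku : (1 - c ^ 2) * (α + c) / (2 * α) ≤ u (s n) := by
    rw [div_le_iff₀ (by positivity), ← hsum]
    nlinarith
  rw [Function.comp_apply, le_div_iff₀ hk, mul_comm]
  exact mul_le_mul_of_nonneg_right hku hw.le

end IsOrbit

/-- For `α > 1`, the set of limit points as `τ → −∞` of any non-stationary physical
trajectory is exactly the boundary curve
`∂Ω = {(p,q) : p ≥ 0 ∧ p² + q² = 1} ∪ {(0,q) : −1 ≤ q ≤ 1}`:
`∂Ω` is a past limit cycle. -/
theorem stmt12 (α : ℝ) (hα : 1 < α) (τ₀ : ℝ) (p q : ℝ → ℝ)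
    (hp : ∀ τ ∈ Set.Iic τ₀, HasDerivAt p (p τ * (q τ) ^ 2 - α * p τ * q τ) τ)
    (hq : ∀ τ ∈ Set.Iic τ₀,
      HasDerivAt q ((q τ) ^ 3 + α * (q τ) ^ 2 - q τ - α + 2 * α * (p τ) ^ 2) τ)
    (hΩ : ∀ τ ∈ Set.Iic τ₀, (p τ, q τ) ∈ Omega)
    (hne : ¬ ∀ τ ∈ Set.Iic τ₀, (p τ, q τ) = ((1 / Real.sqrt 2, 0) : ℝ × ℝ)) :
    {x : ℝ × ℝ | ∃ s : ℕ → ℝ, Filter.Tendsto s Filter.atTop Filter.atBot ∧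
        Filter.Tendsto (fun n => (p (s n), q (s n))) Filter.atTop (nhds x)} =
      {x : ℝ × ℝ | 0 ≤ x.1 ∧ x.1 ^ 2 + x.2 ^ 2 = 1} ∪
        {x : ℝ × ℝ | x.1 = 0 ∧ -1 ≤ x.2 ∧ x.2 ≤ 1} := by
  have hp0 : ∀ t ≤ τ₀, 0 < p t := fun t ht => (hΩ t ht).1
  have hO : IsOrbit α τ₀ (fun t => p t ^ 2) (fun t => 1 - p t ^ 2 - q t ^ 2) q :=
    { u_pos := fun t ht => pow_pos (hp0 t ht) 2
      w_pos := fun t ht => by linarith [(hΩ t ht).2]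
      sum_eq := fun t ht => by ring
      deriv_u := fun t ht => ((hp t ht).pow 2).congr_deriv (by push_cast; ring)
      deriv_w := fun t ht => ((((hp t ht).pow 2).const_sub 1).sub
        ((hq t ht).pow 2)).congr_deriv (by push_cast; ring)
      deriv_q := fun t ht => (hq t ht).congr_deriv (by ring) }
  obtain ⟨T, hTτ, hT⟩ : ∃ T ≤ τ₀, p T ^ 2 * (1 - p T ^ 2 - q T ^ 2) < 1 / 4 := by
    by_contra! hge
    refine hne fun t ht => ?_
    have h1 := hge t ht
    have hpt := pow_pos (hp0 t ht) 2
    have hq2 : q t ^ 2 = 0 := by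
      have : p t ^ 2 * q t ^ 2 ≤ 0 := by nlinarith [sq_nonneg (p t ^ 2 - 1 / 2)]
      nlinarith [sq_nonneg (q t)]
    have hp2 : p t ^ 2 = 1 / 2 := by
      have : (p t ^ 2 - 1 / 2) ^ 2 = 0 := by
        rw [hq2] at h1
        nlinarith [sq_nonneg (p t ^ 2 - 1 / 2)]
      linarith [pow_eq_zero_iff (two_ne_zero) |>.1 this]
    refine Prod.ext ?_ (pow_eq_zero_iff two_ne_zero |>.1 hq2)
    rw [← Real.sqrt_sq (hp0 t ht).le, hp2, Real.sqrt_div' 1 (by norm_num), Real.sqrt_one]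
  have hOT := hO.mono hTτ
  have hV := hOT.tendsto_mul hα hT
  set γ : ℝ → ℝ × ℝ := fun t => (p t, q t) with hγ
  have hset : {x : ℝ × ℝ | ∃ s : ℕ → ℝ, Tendsto s atTop atBot ∧
      Tendsto (fun n => (p (s n), q (s n))) atTop (𝓝 x)} = {x | MapClusterPt x atBot γ} := by
    ext x
    exact ⟨fun ⟨s, hs, hx⟩ => MapClusterPt.of_comp hs hx.mapClusterPt,
      fun hx => (MapClusterPt.exists_seq_tendsto hx).imp fun s hs => hs.symm⟩
  have hupper : ∀ c ∈ Ioo (-1 : ℝ) 1, MapClusterPt (√(1 - c ^ 2), c) atBot γ := by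
    intro c hc
    obtain ⟨s, hs, hsT, hsc, hw⟩ := hOT.exists_seq_tendsto_w hα hT hc
    refine MapClusterPt.of_comp hs (Tendsto.mapClusterPt ?_)
    refine Tendsto.prodMk_nhds ?_ (by simp [hsc])
    have := (hw.const_sub (1 - c ^ 2)).sqrt
    rw [sub_zero] at this
    refine this.congr fun n => ?_
    rw [hsc, show 1 - c ^ 2 - (1 - p (s n) ^ 2 - c ^ 2) = p (s n) ^ 2 by ring,
      Real.sqrt_sq (hp0 _ ((hsT n).trans hTτ)).le]
  have hlower : ∀ c ∈ Ioo (-1 : ℝ) 1, MapClusterPt (0, c) atBot γ := by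
    intro c hc
    obtain ⟨s, hs, hsT, hsc, hw⟩ := hOT.swap.exists_seq_tendsto_w hα (by rwa [mul_comm])
      (c := -c) ⟨by linarith [hc.2], by linarith [hc.1]⟩
    refine MapClusterPt.of_comp hs (Tendsto.mapClusterPt ?_)
    refine Tendsto.prodMk_nhds ?_ (by simp [neg_inj.1 (hsc _)])
    have := hw.sqrt
    rw [Real.sqrt_zero] at this
    exact this.congr fun n => Real.sqrt_sq (hp0 _ ((hsT n).trans hTτ)).le
  have hsegment : ∀ c ∈ Icc (-1 : ℝ) 1, MapClusterPt (0, c) atBot γ := by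
    have hcl : IsClosed {c : ℝ | MapClusterPt ((0, c) : ℝ × ℝ) atBot γ} :=
      isClosed_setOfPred_clusterPt.preimage (by fun_prop : Continuous fun c : ℝ => ((0 : ℝ), c))
    rw [← closure_Ioo (by norm_num : (-1 : ℝ) ≠ 1)]
    exact closure_minimal hlower hcl
  rw [hset]
  apply Subset.antisymm
  · intro x hx
    obtain ⟨s, hx, hs⟩ := MapClusterPt.exists_seq_tendsto hx
    have h1 : Tendsto (fun n => p (s n)) atTop (𝓝 x.1) := (continuous_fst.tendsto x).comp hx
    have h2 : Tendsto (fun n => q (s n)) atTop (𝓝 x.2) := (continuous_snd.tendsto x).comp hx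
    have hev := hs.eventually (eventually_le_atBot τ₀)
    have hx1 : 0 ≤ x.1 := ge_of_tendsto h1 (hev.mono fun n hn => (hp0 _ hn).le)
    have hx2 : x.1 ^ 2 + x.2 ^ 2 ≤ 1 :=
      le_of_tendsto ((h1.pow 2).add (h2.pow 2)) (hev.mono fun n hn => (hΩ _ hn).2.le)
    have hx0 : x.1 ^ 2 * (1 - x.1 ^ 2 - x.2 ^ 2) = 0 :=
      tendsto_nhds_unique ((h1.pow 2).mul (((h1.pow 2).const_sub 1).sub (h2.pow 2))) (hV.comp hs)
    rcases mul_eq_zero.1 hx0 with h | h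
    · right
      have h' : x.1 = 0 := pow_eq_zero_iff two_ne_zero |>.1 h
      exact ⟨h', by nlinarith, by nlinarith⟩
    · left
      exact ⟨hx1, by linarith⟩
  · rintro ⟨a, c⟩ (⟨ha, hac⟩ | ⟨ha, hc⟩)
    · simp only at ha hac
      rcases ha.eq_or_lt with rfl | ha
      · exact hsegment c ⟨by nlinarith, by nlinarith⟩
      · have hsq : a = √(1 - c ^ 2) := by
          rw [← hac, add_sub_cancel_right, Real.sqrt_sq ha.le]
        rw [hsq]
        exact hupper c ⟨by nlinarith [pow_pos ha 2], by nlinarith [pow_pos ha 2]⟩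
    · simp only at ha hc
      rw [ha]
      exact hsegment c hc
end

section
/- Let λ > √6 and let (K, φ) be a non-trivial scalar field cosmology on (0, t₀] such that K(t) → ∞ as t → 0⁺. Define the spatial volume element v(t) = exp(−∫_t^{t₀} K(u) du), so that v'(t) = K(t) v(t) and v(t₀) = 1. Then for every m > 1 there exist v₀ > 0 and δ ∈ (0, t₀) such that v(t) > v₀ · t^m for all t ∈ (0, δ); that is, near the singularity the volume element expands faster than any power law with power greater than one. -/
/-- A steep exponential wall dominates: the virial-type expression on the right controls any
multiple of the potential on the side `0 ≤ x`, up to a constant. -/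
lemma mul_potential_le_virial_of_nonneg {lam M x q : ℝ} (hlam : √6 < lam) (hM : 0 ≤ M)
    (hq : q ^ 2 ≤ 2 / 3) (hx : 0 ≤ x) :
    M * (Real.exp (lam * x) + Real.exp (-(lam * x))) ≤
      x * (lam * (Real.exp (lam * x) - Real.exp (-(lam * x)))) +
        3 * (x * q * (Real.exp (lam * x) + Real.exp (-(lam * x)))) +
        (M * Real.exp (lam * (M / (lam - √6))) + M + 2) := by
  have hlam0 : 0 < lam := (Real.sqrt_nonneg 6).trans_lt hlam
  have hη : 0 < lam - √6 := sub_pos.2 hlam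
  have h3q : -√6 ≤ 3 * q := by
    have h : |3 * q| ≤ √6 := Real.abs_le_sqrt (by nlinarith)
    exact (abs_le.1 h).1
  have hEpos := Real.exp_pos (lam * x)
  have hFpos := Real.exp_pos (-(lam * x))
  have hF1 : Real.exp (-(lam * x)) ≤ 1 := Real.exp_le_one_iff.2 (by nlinarith)
  have hxF : lam * x * Real.exp (-(lam * x)) ≤ 1 := by
    have h1 : lam * x ≤ Real.exp (lam * x) := by linarith [Real.add_one_le_exp (lam * x)]
    calc lam * x * Real.exp (-(lam * x)) ≤ Real.exp (lam * x) * Real.exp (-(lam * x)) := by gcongr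
      _ = 1 := by rw [← Real.exp_add]; simp
  have hmain : M * Real.exp (lam * x) ≤
      (lam - √6) * x * Real.exp (lam * x) + M * Real.exp (lam * (M / (lam - √6))) := by
    rcases le_total (M / (lam - √6)) x with h | h
    · have h2 : M ≤ (lam - √6) * x := by rwa [div_le_iff₀' hη] at h
      have h3 : M * Real.exp (lam * x) ≤ (lam - √6) * x * Real.exp (lam * x) := by gcongr
      have h4 : 0 ≤ M * Real.exp (lam * (M / (lam - √6))) := by positivity
      linarith
    · have h3 : M * Real.exp (lam * x) ≤ M * Real.exp (lam * (M / (lam - √6))) := by gcongr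
      have h4 : 0 ≤ (lam - √6) * x * Real.exp (lam * x) := by positivity
      linarith
  generalize Real.exp (lam * x) = E at *
  generalize Real.exp (-(lam * x)) = F at *
  have hMF : M * F ≤ M := mul_le_of_le_one_right hM hF1
  have hqV : -√6 * (x * (E + F)) ≤ 3 * q * (x * (E + F)) := by gcongr
  have hsF : √6 * (x * F) ≤ lam * (x * F) := by gcongr
  nlinarith

lemma mul_potential_le_virial {lam M x q : ℝ} (hlam : √6 < lam) (hM : 0 ≤ M)
    (hq : q ^ 2 ≤ 2 / 3) :
    M * (Real.exp (lam * x) + Real.exp (-(lam * x))) ≤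
      x * (lam * (Real.exp (lam * x) - Real.exp (-(lam * x)))) +
        3 * (x * q * (Real.exp (lam * x) + Real.exp (-(lam * x)))) +
        (M * Real.exp (lam * (M / (lam - √6))) + M + 2) := by
  rcases le_total 0 x with hx | hx
  · exact mul_potential_le_virial_of_nonneg hlam hM hq hx
  · have h := mul_potential_le_virial_of_nonneg (x := -x) (q := -q) hlam hM (by simpa using hq)
      (by linarith)
    rw [mul_neg, neg_neg] at h
    linarith

/-- The quantity `φ φ' / K` is bounded by `log K` along a cosmology. -/
lemma field_mul_velocity_div_le_log {lam x y k : ℝ} (hlam : √6 < lam) (hk : 1 ≤ k)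
    (hcon : k ^ 2 = 3 * (Real.exp (lam * x) + Real.exp (-(lam * x))) + (3 / 2) * y ^ 2) :
    x * y / k ≤ Real.log k := by
  have hk0 : 0 < k := by linarith
  have hlam2 : 2 < lam := lt_of_le_of_lt (Real.le_sqrt_of_sq_le (by norm_num)) hlam
  have hE := Real.exp_pos (lam * x)
  have hF := Real.exp_pos (-(lam * x))
  have hlog : ∀ z, Real.exp z ≤ k ^ 2 → z ≤ 2 * Real.log k := fun z hz => by
    have := (Real.le_log_iff_exp_le (by positivity)).2 hz
    rwa [Real.log_pow, Nat.cast_ofNat] at this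
  have h1 := hlog (lam * x) (by nlinarith)
  have h2 := hlog (-(lam * x)) (by nlinarith)
  have hx : |x| ≤ Real.log k := by
    have hL := Real.log_nonneg hk
    rw [abs_le]
    constructor <;> nlinarith
  have hy : |y| ≤ k := abs_le_of_sq_le_sq (by nlinarith) hk0.le
  rw [div_le_iff₀ hk0]
  calc x * y ≤ |x| * |y| := by rw [← abs_mul]; exact le_abs_self _
    _ ≤ Real.log k * k := by gcongr; exact Real.log_nonneg hk

lemma antitoneOn_Ioo_of_hasDerivAt_nonpos {a b : ℝ} {f f' : ℝ → ℝ}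
    (hf : ∀ t ∈ Set.Ioo a b, HasDerivAt f (f' t) t) (hf' : ∀ t ∈ Set.Ioo a b, f' t ≤ 0) :
    AntitoneOn f (Set.Ioo a b) := by
  refine antitoneOn_of_deriv_nonpos (convex_Ioo a b)
    (fun t ht => (hf t ht).continuousAt.continuousWithinAt) ?_ ?_ <;> rw [interior_Ioo]
  · exact fun t ht => (hf t ht).differentiableAt.differentiableWithinAt
  · exact fun t ht => (hf t ht).deriv ▸ hf' t ht

/-- If `N' = -K` and `log K ≥ N / m + c` near `0`, then `exp (-N)` dominates a multiple of `t ^ m`. -/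
lemma exists_mul_rpow_lt_exp_neg {b m c : ℝ} (hb : 0 < b) (hm : 0 < m) {K N : ℝ → ℝ}
    (hN : ∀ t ∈ Set.Ioo 0 b, HasDerivAt N (-K t) t) (hK : ∀ t ∈ Set.Ioo 0 b, 0 < K t)
    (hlog : ∀ t ∈ Set.Ioo 0 b, N t / m + c ≤ Real.log (K t)) :
    ∃ v₀ > (0 : ℝ), ∀ t ∈ Set.Ioo 0 b, v₀ * t ^ m < Real.exp (-N t) := by
  have hc : 0 < Real.exp c / m := div_pos (Real.exp_pos c) hm
  have hanti : AntitoneOn (fun t => Real.exp c / m * t - Real.exp (-N t / m)) (Set.Ioo 0 b) := by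
    refine antitoneOn_Ioo_of_hasDerivAt_nonpos
      (f' := fun t => Real.exp c / m - Real.exp (-N t / m) * (K t / m)) (fun t ht => ?_)
      fun t ht => ?_
    · convert! ((hasDerivAt_id t).const_mul (Real.exp c / m)).sub
        (((hN t ht).neg.div_const m).exp) using 1
      simp
    · have h1 : Real.exp (N t / m + c) ≤ K t := (Real.le_log_iff_exp_le (hK t ht)).1 (hlog t ht)
      have h2 : Real.exp c = Real.exp (-N t / m) * Real.exp (N t / m + c) := by
        rw [← Real.exp_add]; congr 1; ring
      have h3 : Real.exp c ≤ Real.exp (-N t / m) * K t := by rw [h2]; gcongr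
      have h4 : Real.exp c / m ≤ Real.exp (-N t / m) * K t / m := by gcongr
      rw [sub_nonpos, ← mul_div_assoc]
      exact h4
  refine ⟨(Real.exp c / m / 2) ^ m, by positivity, fun t ht => ?_⟩
  have ht0 := ht.1
  have hs : t / 2 ∈ Set.Ioo 0 b := ⟨by linarith, by linarith [ht.2]⟩
  have h := hanti hs ht (by linarith)
  have hpos := Real.exp_pos (-N (t / 2) / m)
  have h5 : Real.exp c / m / 2 * t < Real.exp (-N t / m) := by
    simp only at h
    linarith
  rw [← Real.mul_rpow (by positivity) ht0.le]
  calc (Real.exp c / m / 2 * t) ^ m < Real.exp (-N t / m) ^ m :=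
        Real.rpow_lt_rpow (by positivity) h5 hm
    _ = Real.exp (-N t) := by rw [← Real.exp_mul]; congr 1; field_simp

open intervalIntegral in
/-- Let `λ > √6` and let `(K, φ)` (with `ψ = φ'`) be a non-trivial scalar field cosmology
with potential `V(φ) = exp(λφ) + exp(−λφ)` on `(0, t₀]` such that `K(t) → ∞` as `t → 0⁺`.
With the volume element `v(t) = exp(−∫_t^{t₀} K(u) du)`, for every `m > 1` there exist
`v₀ > 0` and `δ ∈ (0, t₀)` such that `v(t) > v₀ · t^m` for all `t ∈ (0, δ)`. -/
theorem stmt18 (lam : ℝ) (hlam : Real.sqrt 6 < lam) (t₀ : ℝ) (ht₀ : 0 < t₀)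
    (K φ ψ : ℝ → ℝ)
    (hφ : ∀ t ∈ Set.Ioc (0 : ℝ) t₀, HasDerivAt φ (ψ t) t)
    (hψ : ∀ t ∈ Set.Ioc (0 : ℝ) t₀, HasDerivAt ψ
      (-K t * ψ t - lam * (Real.exp (lam * φ t) - Real.exp (-(lam * φ t)))) t)
    (hK : ∀ t ∈ Set.Ioc (0 : ℝ) t₀, HasDerivAt K (-(3 / 2) * (ψ t) ^ 2) t)
    (hcon : ∀ t ∈ Set.Ioc (0 : ℝ) t₀,
      (K t) ^ 2 = 3 * (Real.exp (lam * φ t) + Real.exp (-(lam * φ t)))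
        + (3 / 2) * (ψ t) ^ 2)
    (hKpos : ∀ t ∈ Set.Ioc (0 : ℝ) t₀, 0 < K t)
    (hnt : ∃ t ∈ Set.Ioc (0 : ℝ) t₀, ψ t ≠ 0)
    (hsing : Filter.Tendsto K (nhdsWithin 0 (Set.Ioi 0)) Filter.atTop) :
    ∀ m : ℝ, 1 < m → ∃ v₀ > (0 : ℝ), ∃ δ : ℝ, 0 < δ ∧ δ < t₀ ∧
      ∀ t : ℝ, 0 < t → t < δ →
        v₀ * t ^ m < Real.exp (-∫ u in t..t₀, K u) := by
  intro m hm
  have hm1 : 0 < m - 1 := by linarith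
  obtain ⟨M, hMdef⟩ : ∃ M, M = (6 * m + 3) / (m - 1) := ⟨_, rfl⟩
  have hM : 0 < M := by rw [hMdef]; positivity
  have hMm : (M - 6) * m = M + 3 := by rw [hMdef]; field_simp; ring
  obtain ⟨C, hC⟩ : ∃ C, C = M * Real.exp (lam * (M / (lam - √6))) + M + 2 := ⟨_, rfl⟩
  obtain ⟨b, hb0, hbt, hKb⟩ : ∃ b, 0 < b ∧ b < t₀ ∧ ∀ t ∈ Set.Ioo 0 b, 1 ≤ K t ∧ C ≤ K t := by
    have h := (hsing.eventually_ge_atTop 1).and (hsing.eventually_ge_atTop C)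
    obtain ⟨u, hu, hsub⟩ := mem_nhdsGT_iff_exists_Ioo_subset.1 h
    refine ⟨min u (t₀ / 2), lt_min hu (by linarith), (min_le_right _ _).trans_lt (by linarith),
      fun t ht => hsub ⟨ht.1, ht.2.trans_le (min_le_left _ _)⟩⟩
  have hmem : ∀ t ∈ Set.Ioo 0 b, t ∈ Set.Ioc 0 t₀ := fun t ht => ⟨ht.1, (ht.2.trans hbt).le⟩
  obtain ⟨N, hNdef⟩ : ∃ N : ℝ → ℝ, N = fun t => ∫ u in t..t₀, K u := ⟨_, rfl⟩
  have hN : ∀ t ∈ Set.Ioo 0 b, HasDerivAt N (-K t) t := fun t ht => by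
    rw [hNdef]
    refine intervalIntegral.integral_hasDerivAt_left (ContinuousOn.intervalIntegrable ?_) ?_
      (hK t (hmem t ht)).continuousAt
    · rw [Set.uIcc_of_le (hmem t ht).2]
      exact fun u hu => (hK u ⟨ht.1.trans_le hu.1, hu.2⟩).continuousAt.continuousWithinAt
    · exact ContinuousOn.stronglyMeasurableAtFilter isOpen_Ioo
        (fun u hu => (hK u (hmem u hu)).continuousAt.continuousWithinAt) t ht
  have hanti : AntitoneOn (fun t => M * Real.log (K t) + 3 * (φ t * ψ t / K t) - (M - 6) * N t)
      (Set.Ioo 0 b) := by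
    refine antitoneOn_Ioo_of_hasDerivAt_nonpos (fun t ht =>
      (((hK t (hmem t ht)).log (hKpos t (hmem t ht)).ne').const_mul M).add
        ((((hφ t (hmem t ht)).mul (hψ t (hmem t ht))).div (hK t (hmem t ht))
          (hKpos t (hmem t ht)).ne').const_mul 3) |>.sub ((hN t ht).const_mul (M - 6)))
      fun t ht => ?_
    have hk := hKpos t (hmem t ht)
    have hc := hcon t (hmem t ht)
    have hE := Real.exp_pos (lam * φ t)
    have hF := Real.exp_pos (-(lam * φ t))
    have hq : (ψ t / K t) ^ 2 ≤ 2 / 3 := by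
      rw [div_pow, div_le_iff₀ (by positivity)]
      linarith
    have hvir := mul_potential_le_virial (x := φ t) hlam hM.le hq
    rw [← hC] at hvir
    have hCK : C ≤ K t ^ 2 := (hKb t ht).2.trans (by nlinarith [(hKb t ht).1])
    simp only [Pi.mul_apply]
    generalize Real.exp (lam * φ t) = E at *
    generalize Real.exp (-(lam * φ t)) = F at *
    generalize K t = k at *
    generalize ψ t = y at *
    generalize φ t = x at *
    have hy : y ^ 2 = 2 / 3 * (k ^ 2 - 3 * (E + F)) := by linarith
    have hid : M * (-(3 / 2) * y ^ 2 / k) +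
        3 * (((y * y + x * (-k * y - lam * (E - F))) * k - x * y * (-(3 / 2) * y ^ 2)) / k ^ 2) -
        (M - 6) * -k = 3 / k * (M * (E + F) - x * (lam * (E - F)) - 3 * (x * (y / k) * (E + F))
          - k ^ 2 - (k ^ 2 - y ^ 2)) := by
      have e1 : x * y * (-(3 / 2) * y ^ 2) = -(x * y * (k ^ 2 - 3 * (E + F))) := by
        rw [hy]; ring
      have e2 : M * (-(3 / 2) * y ^ 2 / k) = -M * (k ^ 2 - 3 * (E + F)) / k := by
        rw [hy]; ring
      rw [e1, e2]
      field_simp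
      ring
    rw [hid]
    refine mul_nonpos_of_nonneg_of_nonpos (by positivity) ?_
    linarith [sq_nonneg k]
  have hb2 : b / 2 ∈ Set.Ioo 0 b := ⟨by linarith, by linarith⟩
  obtain ⟨H, hH⟩ : ∃ H, ∀ t ∈ Set.Ioo 0 (b / 2),
      H ≤ M * Real.log (K t) + 3 * (φ t * ψ t / K t) - (M - 6) * N t :=
    ⟨_, fun t ht => hanti ⟨ht.1, ht.2.trans hb2.2⟩ hb2 ht.2.le⟩
  have hsub : ∀ t ∈ Set.Ioo 0 (b / 2), t ∈ Set.Ioo 0 b := fun t ht => ⟨ht.1, ht.2.trans hb2.2⟩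
  obtain ⟨v₀, hv₀, hv⟩ := exists_mul_rpow_lt_exp_neg (c := H / (M + 3)) hb2.1 (by linarith : 0 < m)
    (fun t ht => hN t (hsub t ht)) (fun t ht => hKpos t (hmem t (hsub t ht))) fun t ht => by
      have hG := field_mul_velocity_div_le_log hlam (hKb t (hsub t ht)).1
        (hcon t (hmem t (hsub t ht)))
      have hHt := hH t ht
      have hfrac : N t / m = (M - 6) * N t / (M + 3) := by
        rw [div_eq_div_iff (by linarith) (by linarith), ← hMm]
        ring
      rw [hfrac, ← add_div, div_le_iff₀ (by linarith)]
      linarith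
  refine ⟨v₀, hv₀, b / 2, hb2.1, hb2.2.trans hbt, fun t ht htb => ?_⟩
  simpa only [hNdef] using hv t ⟨ht, htb⟩
end
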